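/- Let {C_0, ..., C_d} be a d-critical family in R^d with hollow D (a bounded connected component of the complement of the union). Then the closure of the convex hull of D is a d-simplex; specifically, cl(Conv(D)) equals the convex hull of the points p_0, ..., p_d, where p_j is the unique point of ∩_{i≠j} C_i nearest to C_j. -/

import Mathlib

/-- weighted sums in a convex set -/
theorem hollow_wsum {d : ℕ} {E : Type*} [AddCommGroup E] [Module ℝ E] (T : Set E)
    (hT : Convex ℝ T) (p : Fin (d + 1) → E) (y : E)
    (b : Fin (d + 1) → ℝ) (hb : ∀ j, 0 ≤ b j) (hS : 0 < ∑ j, b j)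
    (hp : ∀ j, b j ≠ 0 → p j ∈ T) :
    y + (∑ j, b j)⁻¹ • ∑ j, b j • (p j - y) ∈ T := by
  have h1 : y + (∑ j, b j)⁻¹ • ∑ j, b j • (p j - y) = ∑ j, ((∑ j, b j)⁻¹ * b j) • p j := by
    simp only [smul_sub, Finset.sum_sub_distrib, ← Finset.sum_smul, mul_smul, ← Finset.smul_sum]
    rw [smul_smul, inv_mul_cancel₀ hS.ne', one_smul]
    abel
  rw [h1, ← finsum_eq_sum_of_fintype]
  refine hT.finsum_mem (fun j => mul_nonneg (inv_nonneg.2 hS.le) (hb j)) ?_ ?_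
  · rw [finsum_eq_sum_of_fintype, ← Finset.mul_sum, inv_mul_cancel₀ hS.ne']
  · intro j hj
    exact hp j (right_ne_zero_of_mul hj)

theorem hollow_escape {d : ℕ} (C : Fin (d + 1) → Set (EuclideanSpace ℝ (Fin d)))
    (hconv : ∀ i, Convex ℝ (C i)) (p : Fin (d + 1) → EuclideanSpace ℝ (Fin d))
    (hp : ∀ j i, i ≠ j → p j ∈ C i) (y : EuclideanSpace ℝ (Fin d))
    (hy : ∀ i, y ∉ C i) (hyp : y ∉ convexHull ℝ (Set.range p)) :
    ∃ w : EuclideanSpace ℝ (Fin d), w ≠ 0 ∧ ∀ t : ℝ, 0 ≤ t → ∀ i, y + t • w ∉ C i := by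
  have hdep : ¬ LinearIndependent ℝ (fun j => p j - y) := by
    intro h
    have := h.fintype_card_le_finrank
    simp at this
  rw [Fintype.not_linearIndependent_iff] at hdep
  obtain ⟨a, ha, j0, hj0⟩ := hdep
  have hw : ∑ j, (max (a j) 0) • (p j - y) = ∑ j, (max (- a j) 0) • (p j - y) := by
    rw [← sub_eq_zero, ← Finset.sum_sub_distrib, ← ha]
    refine Finset.sum_congr rfl fun j _ => ?_
    rw [← sub_smul]
    congr 1
    rcases le_total (a j) 0 with h | h
    · rw [max_eq_right h, max_eq_left (by linarith)]; ring
    · rw [max_eq_left h, max_eq_right (by linarith)]; ring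
  set w := ∑ j, (max (a j) 0) • (p j - y) with hwdef
  -- a nonnegative nonzero relation is impossible
  have key : ∀ b : Fin (d + 1) → ℝ, (∀ j, 0 ≤ b j) → 0 < ∑ j, b j →
      ∑ j, b j • (p j - y) ≠ 0 := by
    intro b hb hS h0
    have := hollow_wsum (convexHull ℝ (Set.range p)) (convex_convexHull ℝ _) p y b hb hS
      (fun j _ => subset_convexHull ℝ _ ⟨j, rfl⟩)
    rw [h0, smul_zero, add_zero] at this
    exact hyp this
  have hnz : ∀ b : Fin (d + 1) → ℝ, (∀ j, 0 ≤ b j) → (∃ j, b j ≠ 0) → 0 < ∑ j, b j := by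
    intro b hb ⟨j, hj⟩
    exact Finset.sum_pos' (fun j _ => hb j) ⟨j, Finset.mem_univ _, lt_of_le_of_ne (hb j) hj.symm⟩
  have hw0 : w ≠ 0 := by
    rcases lt_or_gt_of_ne hj0 with h | h
    · rw [hw]
      refine key _ (fun j => le_max_right _ _) (hnz _ (fun j => le_max_right _ _) ⟨j0, ?_⟩)
      rw [max_eq_left (by linarith)]; linarith
    · refine key _ (fun j => le_max_right _ _) (hnz _ (fun j => le_max_right _ _) ⟨j0, ?_⟩)
      rw [max_eq_left (by linarith)]; linarith
  have hpos : ∀ b : Fin (d + 1) → ℝ, (∀ j, 0 ≤ b j) → ∑ j, b j • (p j - y) = w →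
      0 < ∑ j, b j := by
    intro b hb hbw
    refine hnz b hb ?_
    by_contra! h
    apply hw0
    rw [← hbw]
    exact Finset.sum_eq_zero fun j _ => by rw [h j, zero_smul]
  have hhit : ∀ k, ∃ s : ℝ, 0 < s ∧ y + s • w ∈ C k := by
    intro k
    have aux : ∀ b : Fin (d + 1) → ℝ, (∀ j, 0 ≤ b j) → ∑ j, b j • (p j - y) = w → b k = 0 →
        ∃ s : ℝ, 0 < s ∧ y + s • w ∈ C k := by
      intro b hb hbw hbk
      have hS := hpos b hb hbw
      refine ⟨(∑ j, b j)⁻¹, inv_pos.2 hS, ?_⟩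
      rw [← hbw]
      refine hollow_wsum _ (hconv k) p y b hb hS fun j hj => hp j k ?_
      rintro rfl
      exact hj hbk
    rcases le_total (a k) 0 with h | h
    · exact aux _ (fun j => le_max_right _ _) rfl (max_eq_right h)
    · exact aux _ (fun j => le_max_right _ _) hw.symm (max_eq_right (by linarith))
  refine ⟨-w, neg_ne_zero.2 hw0, fun t ht k hk => ?_⟩
  obtain ⟨s, hs, hsk⟩ := hhit k
  apply hy k
  have := hconv k hk hsk (a := s / (s + t)) (b := t / (s + t)) (by positivity) (by positivity)
    (by field_simp)
  convert this using 1
  have hst : s + t ≠ 0 := by positivity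
  have e1 : (s / (s + t)) • (y + t • -w) + (t / (s + t)) • (y + s • w)
      = (s / (s + t) + t / (s + t)) • y + (t / (s + t) * s - s / (s + t) * t) • w := by
    module
  rw [e1]
  have e2 : s / (s + t) + t / (s + t) = 1 := by field_simp
  have e3 : t / (s + t) * s - s / (s + t) * t = 0 := by field_simp; ring
  rw [e2, e3]; simp

theorem hollow_functional {ι : Type*} [Fintype ι] [Nonempty ι] {d : ℕ}
    (hcard : Fintype.card ι ≤ d) (g : ι → (EuclideanSpace ℝ (Fin d) →ₗ[ℝ] ℝ)) :
    ∃ u : EuclideanSpace ℝ (Fin d), u ≠ 0 ∧ ∀ i, g i u ≤ 0 := by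
  let G : EuclideanSpace ℝ (Fin d) →ₗ[ℝ] (ι → ℝ) := LinearMap.pi g
  by_cases hinj : Function.Injective G
  · have h1 := LinearMap.finrank_le_finrank_of_injective hinj
    have hsurj : Function.Surjective G := by
      refine (LinearMap.injective_iff_surjective_of_finrank_eq_finrank ?_).1 hinj
      simp at h1 ⊢
      omega
    obtain ⟨u, hu⟩ := hsurj (fun _ => -1)
    refine ⟨u, ?_, fun i => ?_⟩
    · rintro rfl
      have := congrFun hu (Classical.arbitrary ι)
      simp at this
    · have := congrFun hu i
      have h : g i u = -1 := this
      rw [h]; norm_num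
  · rw [← LinearMap.ker_eq_bot, Submodule.eq_bot_iff] at hinj
    push Not at hinj
    obtain ⟨u, hu, hu0⟩ := hinj
    refine ⟨u, hu0, fun i => ?_⟩
    have := congrFun (LinearMap.mem_ker.1 hu) i
    exact le_of_eq this

/-- a farthest point of the hollow from any center lies in at least `d` of the sets -/
theorem hollow_far {d : ℕ} (C : Fin (d + 1) → Set (EuclideanSpace ℝ (Fin d)))
    (hcomp : ∀ i, IsCompact (C i)) (hconv : ∀ i, Convex ℝ (C i))
    (hempty : (⋂ i, C i) = ∅)
    (D : Set (EuclideanSpace ℝ (Fin d)))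
    (hDC : ∀ y ∈ D, ∀ i, y ∉ C i)
    (hDmem : ∀ y ∈ D, ∀ u : EuclideanSpace ℝ (Fin d), ∀ T : ℝ, 0 ≤ T →
      (∀ t : ℝ, 0 ≤ t → t ≤ T → ∀ i, y + t • u ∉ C i) → y + T • u ∈ D)
    (c e : EuclideanSpace ℝ (Fin d)) (he : e ∈ closure D)
    (hmax : ∀ z ∈ D, dist z c ≤ dist e c) :
    ∃ j, ∀ i, i ≠ j → e ∈ C i := by
  classical
  by_contra! hno
  obtain ⟨j0, hj0⟩ : ∃ j, e ∉ C j := by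
    by_contra! h
    have : e ∈ ⋂ i, C i := Set.mem_iInter.2 h
    rw [hempty] at this
    exact this
  obtain ⟨j1, hj1, hj1'⟩ := hno j0
  let I : Finset (Fin (d + 1)) := Finset.univ.filter (fun i => e ∈ C i)
  have hI : I.card + 1 ≤ d := by
    have h1 : I ⊆ (Finset.univ.erase j0).erase j1 := by
      intro i hi
      have hi' : e ∈ C i := by simpa [I] using hi
      simp only [Finset.mem_erase, Finset.mem_univ, and_true]
      exact ⟨fun h => hj1' (h ▸ hi'), fun h => hj0 (h ▸ hi')⟩
    have h2 := Finset.card_le_card h1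
    rw [Finset.card_erase_of_mem (by simp [hj1]), Finset.card_erase_of_mem (Finset.mem_univ _)] at h2
    simp at h2
    have h3 : d ≠ 0 := by
      rintro rfl
      exact hj1 (Fin.ext (by omega))
    omega
  -- ball missing the others
  have hopen : IsOpen (⋂ i : {i // e ∉ C i}, (C i.1)ᶜ) :=
    isOpen_iInter_of_finite fun i => (hcomp i.1).isClosed.isOpen_compl
  obtain ⟨δ, hδ, hball⟩ := Metric.isOpen_iff.1 hopen e (Set.mem_iInter.2 fun i => i.2)
  have hball' : ∀ z, dist z e < δ → ∀ i, e ∉ C i → z ∉ C i := fun z hz i hi =>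
    Set.mem_iInter.1 (hball (Metric.mem_ball.2 hz)) ⟨i, hi⟩
  set R := dist e c with hR
  have hR0 : 0 ≤ R := dist_nonneg
  set t0 := δ / 2 with ht0
  have ht0p : 0 < t0 := by positivity
  set η := t0 ^ 2 / (2 * R + t0 + 1) with hη
  have hden : 0 < 2 * R + t0 + 1 := by positivity
  have hηp : 0 < η := by positivity
  have hηt : η ≤ t0 := by
    rw [hη, div_le_iff₀ hden]; nlinarith
  have hηm : η * (2 * R + t0 + 1) = t0 ^ 2 := by
    rw [hη]; field_simp
  obtain ⟨y, hyD, hye⟩ := Metric.mem_closure_iff.1 he η hηp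
  have hsep : ∀ i, ∃ f : EuclideanSpace ℝ (Fin d) →L[ℝ] ℝ, ∀ b ∈ C i, f y < f b := by
    intro i
    obtain ⟨f, s, h1, h2⟩ := geometric_hahn_banach_point_closed (hconv i) (hcomp i).isClosed
      (hDC y hyD i)
    exact ⟨f, fun b hb => h1.trans (h2 b hb)⟩
  choose f hf using hsep
  obtain ⟨u, hu0, hu⟩ := hollow_functional (ι := Option {i // i ∈ I}) (d := d) (by simpa using hI)
    (fun o => o.elim (-(innerSL ℝ (e - c)).toLinearMap) (fun i => (f i.1).toLinearMap))
  have huh : 0 ≤ inner ℝ (e - c) u := by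
    have := hu none
    simp at this
    simpa [inner_sub_left] using this
  have hui : ∀ i, e ∈ C i → f i u ≤ 0 := by
    intro i hi
    exact hu (some ⟨i, by simpa [I] using hi⟩)
  have hnu : 0 < ‖u‖ := norm_pos_iff.2 hu0
  set v := ‖u‖⁻¹ • u with hv
  have hv1 : ‖v‖ = 1 := by
    rw [hv, norm_smul, norm_inv, norm_norm, inv_mul_cancel₀ hnu.ne']
  have hvh : 0 ≤ inner ℝ (e - c) v := by
    rw [hv, inner_smul_right]; positivity
  have hvi : ∀ i, e ∈ C i → f i v ≤ 0 := by
    intro i hi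
    rw [hv, map_smul, smul_eq_mul]
    exact mul_nonpos_of_nonneg_of_nonpos (by positivity) (hui i hi)
  have hzD : y + t0 • v ∈ D := by
    refine hDmem y hyD v t0 ht0p.le fun t ht htt i hmem => ?_
    by_cases hi : e ∈ C i
    · have h1 := hf i _ hmem
      rw [map_add, map_smul, smul_eq_mul] at h1
      have := mul_nonpos_of_nonneg_of_nonpos ht (hvi i hi)
      linarith
    · refine hball' _ ?_ i hi hmem
      have h1 : dist (y + t • v) y ≤ t := by
        rw [dist_eq_norm, add_sub_cancel_left, norm_smul, hv1, Real.norm_of_nonneg ht, mul_one]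
      have h2 := dist_triangle (y + t • v) y e
      rw [dist_comm] at hye
      linarith
  have hle := hmax _ hzD
  have h1 : ‖(e - c) + t0 • v‖ ≤ R + η := by
    have : (e - c) + t0 • v = (e - y) + (y + t0 • v - c) := by abel
    rw [this]
    refine (norm_add_le _ _).trans ?_
    rw [← dist_eq_norm, ← dist_eq_norm]
    linarith
  have h2 : ‖(e - c) + t0 • v‖ ^ 2 = R ^ 2 + 2 * (t0 * inner ℝ (e - c) v) + t0 ^ 2 := by
    rw [norm_add_sq_real, inner_smul_right, norm_smul, hv1, Real.norm_of_nonneg ht0p.le, hR,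
      dist_eq_norm]
    ring
  have h3 : 0 ≤ t0 * inner ℝ (e - c) v := by positivity
  have h4 : ‖(e - c) + t0 • v‖ ^ 2 ≤ (R + η) ^ 2 := by gcongr
  nlinarith

/-- if all farthest points of `K` lie in `P`, then `K` lies in the convex hull of `P` -/
theorem hollow_strasz {d : ℕ} (K P : Set (EuclideanSpace ℝ (Fin d))) (hK : IsCompact K)
    (hP : P.Finite) (h : ∀ c, ∀ e ∈ K, (∀ z ∈ K, dist z c ≤ dist e c) → e ∈ P) :
    K ⊆ convexHull ℝ P := by
  intro z hz
  by_contra hzP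
  obtain ⟨f, s, h1, h2⟩ := geometric_hahn_banach_closed_point (convex_convexHull ℝ P)
    (hP.isClosed_convexHull (𝕜 := ℝ)) hzP
  obtain ⟨n, rfl⟩ := (InnerProductSpace.toDual ℝ (EuclideanSpace ℝ (Fin d))).surjective f
  simp only [InnerProductSpace.toDual_apply_apply] at h1 h2
  obtain ⟨M, hM⟩ := hP.isBounded.exists_norm_le
  set T := (M ^ 2 + 1) / (inner ℝ n z - s) with hT
  have hden : 0 < inner ℝ n z - s := by linarith
  have hTp : 0 < T := by positivity
  have hTm : T * (inner ℝ n z - s) = M ^ 2 + 1 := by rw [hT]; field_simp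
  obtain ⟨e, heK, he⟩ := hK.exists_isMaxOn ⟨z, hz⟩
    (f := fun x => dist x (-(T • n))) (by fun_prop)
  have heP := h _ e heK (fun z hz => he hz)
  have h3 : dist z (-(T • n)) ≤ dist e (-(T • n)) := he hz
  have h4 := h1 e (subset_convexHull ℝ _ heP)
  have h5 := hM e heP
  rw [dist_eq_norm, dist_eq_norm, sub_neg_eq_add, sub_neg_eq_add] at h3
  have h6 : ‖z + T • n‖ ^ 2 ≤ ‖e + T • n‖ ^ 2 := by gcongr
  rw [norm_add_sq_real, norm_add_sq_real, inner_smul_right, inner_smul_right,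
    real_inner_comm, real_inner_comm n e] at h6
  have h7 : ‖e‖ ^ 2 ≤ M ^ 2 := by gcongr
  nlinarith [sq_nonneg ‖z‖, mul_lt_mul_of_pos_left h4 hTp, sq_nonneg M]

theorem hollow_facet {d : ℕ} (C : Fin (d + 1) → Set (EuclideanSpace ℝ (Fin d)))
    (hconv : ∀ i, Convex ℝ (C i)) (p : Fin (d + 1) → EuclideanSpace ℝ (Fin d))
    (hp : ∀ j i, i ≠ j → p j ∈ C i) (S : Set (Fin (d + 1))) (k : Fin (d + 1)) (hk : k ∉ S) :
    convexHull ℝ (p '' S) ⊆ C k := by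
  refine convexHull_min ?_ (hconv k)
  rintro _ ⟨j, hj, rfl⟩
  exact hp j k fun h => hk (h ▸ hj)

theorem hollow_nearest {d : ℕ} (C : Fin (d + 1) → Set (EuclideanSpace ℝ (Fin d)))
    (hcomp : ∀ i, IsCompact (C i)) (hconv : ∀ i, Convex ℝ (C i))
    (hempty : (⋂ i, C i) = ∅)
    (p : Fin (d + 1) → EuclideanSpace ℝ (Fin d))
    (hp : ∀ j i, i ≠ j → p j ∈ C i) (j : Fin (d + 1)) (e : EuclideanSpace ℝ (Fin d))
    (hnear : Metric.infDist (p j) (C j) ≤ Metric.infDist e (C j))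
    (he : e ∈ convexHull ℝ (Set.range p)) : e = p j := by
  rcases Nat.eq_zero_or_pos d with rfl | hd
  · exact Subsingleton.elim _ _
  have : Nontrivial (Fin (d + 1)) := Fin.nontrivial_iff_two_le.2 (by omega)
  obtain ⟨k, hk⟩ := exists_ne j
  have hr : Set.range p = insert (p j) (p '' {i | i ≠ j}) := by
    rw [← Set.image_insert_eq, ← Set.image_univ]
    congr 1
    ext i
    simp [em]
  have hne : (p '' {i | i ≠ j}).Nonempty := ⟨p k, k, hk, rfl⟩
  rw [hr, convexHull_insert hne, mem_convexJoin] at he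
  obtain ⟨a, ha, r, hrm, a1, b1, ha1, hb1, hab, rfl⟩ := he
  rw [Set.mem_singleton_iff] at ha
  subst ha
  have hrC : r ∈ C j := hollow_facet C hconv p hp {i | i ≠ j} j (by simp) hrm
  obtain ⟨q, hq, hqd⟩ := (hcomp j).exists_infDist_eq_dist ⟨r, hrC⟩ (p j)
  have hpj : p j ∉ C j := by
    intro h
    have : p j ∈ ⋂ i, C i := Set.mem_iInter.2 fun i => by
      by_cases hi : i = j
      · rw [hi]; exact h
      · exact hp j i hi
    rw [hempty] at this
    exact this
  have hm : 0 < dist (p j) q := dist_pos.2 fun h => hpj (h ▸ hq)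
  have h1 : Metric.infDist (a1 • p j + b1 • r) (C j) ≤ a1 * dist (p j) q := by
    refine (Metric.infDist_le_dist_of_mem (hconv j hq hrC ha1 hb1 hab)).trans ?_
    rw [dist_add_right, dist_smul₀, Real.norm_of_nonneg ha1]
  rw [hqd] at hnear
  have h2 : 1 ≤ a1 := by
    by_contra! h
    nlinarith
  have h3 : b1 = 0 := by linarith
  have h4 : a1 = 1 := by linarith
  rw [h3, h4]; simp


/-- The Hollow Theorem: the closure of the convex hull of the hollow of a
d-critical family is the d-simplex spanned by the unique nearest points p_j. -/
theorem hollow_theorem (d : ℕ)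
    (C : Fin (d + 1) → Set (EuclideanSpace ℝ (Fin d)))
    (hcomp : ∀ i, IsCompact (C i)) (hconv : ∀ i, Convex ℝ (C i))
    (hcrit : ∀ j, (⋂ i ∈ {i : Fin (d + 1) | i ≠ j}, C i).Nonempty)
    (hempty : (⋂ i, C i) = ∅)
    (x : EuclideanSpace ℝ (Fin d)) (hx : x ∈ (⋃ i, C i)ᶜ)
    (D : Set (EuclideanSpace ℝ (Fin d)))
    (hD : D = connectedComponentIn (⋃ i, C i)ᶜ x)
    (hbd : Bornology.IsBounded D)
    (p : Fin (d + 1) → EuclideanSpace ℝ (Fin d))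
    (hp : ∀ j, p j ∈ (⋂ i ∈ {i : Fin (d + 1) | i ≠ j}, C i) ∧
      ∀ q ∈ (⋂ i ∈ {i : Fin (d + 1) | i ≠ j}, C i),
        Metric.infDist (p j) (C j) ≤ Metric.infDist q (C j)) :
    AffineIndependent ℝ p ∧
      closure (convexHull ℝ D) = convexHull ℝ (Set.range p) := by

  have hpm : ∀ j i, i ≠ j → p j ∈ C i := by
    intro j i hij
    have := (hp j).1
    simp only [Set.mem_iInter, Set.mem_ofPred_eq] at this
    exact this i hij
  have hmemC : ∀ y : EuclideanSpace ℝ (Fin d), y ∈ (⋃ i, C i)ᶜ ↔ ∀ i, y ∉ C i := by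
    intro y; simp
  have hDC : ∀ y ∈ D, ∀ i, y ∉ C i := by
    intro y hy
    rw [hD] at hy
    exact (hmemC y).1 (connectedComponentIn_subset _ _ hy)
  have hDmem : ∀ y ∈ D, ∀ u : EuclideanSpace ℝ (Fin d), ∀ T : ℝ, 0 ≤ T →
      (∀ t : ℝ, 0 ≤ t → t ≤ T → ∀ i, y + t • u ∉ C i) → y + T • u ∈ D := by
    intro y hy u T hT h
    rw [hD] at hy ⊢
    rw [connectedComponentIn_eq hy]
    have hpre : IsPreconnected ((fun t : ℝ => y + t • u) '' Set.Icc 0 T) :=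
      isPreconnected_Icc.image _ (by fun_prop)
    refine hpre.subset_connectedComponentIn (x := y) ⟨0, ⟨le_rfl, hT⟩, by simp⟩ ?_
      ⟨T, ⟨hT, le_rfl⟩, rfl⟩
    rintro _ ⟨t, ⟨ht0, ht1⟩, rfl⟩
    exact (hmemC _).2 (h t ht0 ht1)
  have hDsub : D ⊆ convexHull ℝ (Set.range p) := by
    intro y hy
    by_contra hyp
    obtain ⟨w, hw0, hw⟩ := hollow_escape C hconv p hpm y (hDC y hy) hyp
    obtain ⟨M, hM⟩ := hbd.exists_norm_le
    have hwn : 0 < ‖w‖ := norm_pos_iff.2 hw0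
    have hM0 : 0 ≤ M := (norm_nonneg _).trans (hM y hy)
    set T := (2 * M + 1) / ‖w‖ with hT
    have hT0 : 0 ≤ T := by positivity
    have h1 := hM _ (hDmem y hy w T hT0 fun t ht _ => hw t ht)
    have h2 := hM y hy
    have h3 : ‖T • w‖ = 2 * M + 1 := by
      rw [norm_smul, Real.norm_of_nonneg hT0, hT]; field_simp
    have h4 : ‖T • w‖ ≤ ‖y + T • w‖ + ‖y‖ := by
      have := norm_sub_le (y + T • w) y
      rwa [add_sub_cancel_left] at this
    linarith
  have hclosed : IsClosed (convexHull ℝ (Set.range p)) := (Set.finite_range p).isClosed_convexHull (𝕜 := ℝ)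
  have hcl : closure D ⊆ convexHull ℝ (Set.range p) := closure_minimal hDsub hclosed
  have hxD : x ∈ D := hD ▸ mem_connectedComponentIn hx
  have hK : IsCompact (closure D) := hbd.isCompact_closure
  have hstr : closure D ⊆ convexHull ℝ (Set.range p ∩ closure D) := by
    refine hollow_strasz _ _ hK ((Set.finite_range p).inter_of_left _) fun c e he hmax => ⟨?_, he⟩
    obtain ⟨j, hj⟩ := hollow_far C hcomp hconv hempty D hDC hDmem c e he
      (fun z hz => hmax z (subset_closure hz))
    refine ⟨j, (hollow_nearest C hcomp hconv hempty p hpm j e ((hp j).2 e ?_) (hcl he)).symm⟩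
    simp only [Set.mem_iInter, Set.mem_ofPred_eq]
    exact hj
  have hpD : ∀ j, p j ∈ closure D := by
    intro j
    by_contra hj
    refine hDC x hxD j (hollow_facet C hconv p hpm {i | i ≠ j} j (by simp)
      (convexHull_mono ?_ (hstr (subset_closure hxD))))
    rintro _ ⟨⟨i, rfl⟩, hi⟩
    refine ⟨i, ?_, rfl⟩
    rintro rfl
    exact hj hi
  refine ⟨?_, Set.Subset.antisymm ?_ ?_⟩
  · by_contra hna
    obtain ⟨I, z, hz1, hz2⟩ := Convex.radon_partition hna
    have : z ∈ ⋂ i, C i := Set.mem_iInter.2 fun i => by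
      by_cases hi : i ∈ I
      · exact hollow_facet C hconv p hpm Iᶜ i (by simpa using hi) hz2
      · exact hollow_facet C hconv p hpm I i hi hz1
    rw [hempty] at this
    exact this
  · exact closure_minimal (convexHull_min hDsub (convex_convexHull ℝ _)) hclosed
  · refine convexHull_min ?_ (convex_convexHull ℝ D).closure
    rintro _ ⟨j, rfl⟩
    exact closure_mono (subset_convexHull ℝ D) (hpD j)
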